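/- Let K_V^t be a complete t-spread d-partite hypergraph. Then K_V^t satisfies the König property: the maximum cardinality ν(K_V^t) of a matching (a family of pairwise disjoint edges) equals the minimum cardinality τ(K_V^t) of a transversal (a set of vertices meeting all edges). -/

import Mathlib

/-!
Weak duality `ν ≤ τ` holds for every hypergraph: distinct members of a matching meet a transversal
in distinct points. For the converse, a greedy algorithm produces a matching and a transversal of
the same size.

Build edges one after another, each time choosing from left to right the smallest vertex
`greedy k j` of the `j`-th class that exceeds `greedy (k - 1) j` and is at distance at least
`t (j - 1)` from `greedy k (j - 1)`; the value is `≥ n` when there is no such vertex. Let `K` be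
the first `k` for which the algorithm fails, so that edges `0, …, K - 1` form a matching.

The key fact (`separates_greedy`) is that at most `k` vertices suffice to meet every spread path
that ends in class `j` strictly below `greedy k j`. Of the two lower bounds that determine
`greedy k j`, only the larger one matters. If it is `greedy (k - 1) j + 1`, then every path to be
met ends at `greedy (k - 1) j` or below it, so one vertex is added to the set for `(k - 1, j)`. If
it is `greedy k (j - 1) + t (j - 1)`, then the path passes strictly below `greedy k (j - 1)` in
class `j - 1`, and the set for `(k, j - 1)` works. For `k = K` and the last class this gives a
transversal with at most `K` vertices.
-/

/-- `e : Fin d → Fin n` encodes a `𝐭`-spread edge of the complete `𝐭`-spread `d`-partite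
hypergraph `K_V^𝐭`. -/
def IsSpreadEdge (n d : ℕ) (V : Fin d → Finset (Fin n)) (t : ℕ → ℕ) (e : Fin d → Fin n) :
    Prop :=
  (∀ j, e j ∈ V j) ∧
    ∀ (j : ℕ) (h : j + 1 < d),
      (e ⟨j, Nat.lt_of_succ_lt h⟩ : ℕ) + t j ≤ (e ⟨j + 1, h⟩ : ℕ)

/-- The edges of `K_V^𝐭`, as finite vertex sets. -/
def spreadEdgeSet (n d : ℕ) (V : Fin d → Finset (Fin n)) (t : ℕ → ℕ) :
    Set (Finset (Fin n)) :=
  {E | ∃ e : Fin d → Fin n, IsSpreadEdge n d V t e ∧ E = Finset.image e Finset.univ}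

/-- The matching number `ν(K_V^𝐭)`: the maximum cardinality of a family of pairwise
disjoint edges. -/
noncomputable def matchingNumber (n d : ℕ) (V : Fin d → Finset (Fin n)) (t : ℕ → ℕ) : ℕ :=
  sSup {k | ∃ M : Finset (Finset (Fin n)),
    (∀ E ∈ M, E ∈ spreadEdgeSet n d V t) ∧
    (∀ E ∈ M, ∀ F ∈ M, E ≠ F → Disjoint E F) ∧ M.card = k}

/-- The transversal number `τ(K_V^𝐭)`: the minimum cardinality of a set of vertices meeting
every edge. -/
noncomputable def transversalNumber (n d : ℕ) (V : Fin d → Finset (Fin n)) (t : ℕ → ℕ) : ℕ :=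
  sInf {k | ∃ T : Finset (Fin n),
    (∀ E ∈ spreadEdgeSet n d V t, (T ∩ E).Nonempty) ∧ T.card = k}

namespace SpreadKonig

open Classical in
/-- The least `v ≥ a` satisfying `P`; if there is none below `n`, some value `≥ n`, which plays
the role of infinity. -/
noncomputable def next (n : ℕ) (P : ℕ → Prop) (a : ℕ) : ℕ :=
  Nat.find (p := fun v => a ≤ v ∧ (P v ∨ n ≤ v)) ⟨max a n, le_max_left _ _, Or.inr (le_max_right _ _)⟩

lemma le_next (n : ℕ) (P : ℕ → Prop) (a : ℕ) : a ≤ next n P a := by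
  classical
  exact (Nat.find_spec (p := fun v => a ≤ v ∧ (P v ∨ n ≤ v)) _).1

lemma next_mem {n : ℕ} {P : ℕ → Prop} {a : ℕ} (h : next n P a < n) : P (next n P a) := by
  classical
  exact (Nat.find_spec (p := fun v => a ≤ v ∧ (P v ∨ n ≤ v)) _).2.resolve_right (not_le.2 h)

lemma lt_of_lt_next {n : ℕ} {P : ℕ → Prop} {a v : ℕ} (hv : P v) (h : v < next n P a) : v < a := by
  classical
  by_contra hc
  exact Nat.find_min (p := fun v => a ≤ v ∧ (P v ∨ n ≤ v)) _ h ⟨not_lt.1 hc, Or.inl hv⟩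

/-- The greedy edge whose `j`-th vertex lies in the class `W j` and is at least `p j`. -/
noncomputable def row (n : ℕ) (W : ℕ → ℕ → Prop) (t p : ℕ → ℕ) : ℕ → ℕ
  | 0 => next n (W 0) (p 0)
  | j + 1 => next n (W (j + 1)) (max (p (j + 1)) (row n W t p j + t j))

/-- The `k`-th greedy edge, which lies strictly above the previous one in every class. -/
noncomputable def greedy (n : ℕ) (W : ℕ → ℕ → Prop) (t : ℕ → ℕ) : ℕ → ℕ → ℕ
  | 0 => row n W t fun _ => 0
  | k + 1 => row n W t fun j => greedy n W t k j + 1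

/-- The set `T` meets every spread path through the classes `W 0, …, W j` that ends strictly
below `b`. -/
def Separates (W : ℕ → ℕ → Prop) (t : ℕ → ℕ) (T : Finset ℕ) (j b : ℕ) : Prop :=
  ∀ e : ℕ → ℕ, (∀ i ≤ j, W i (e i)) → (∀ i < j, e i + t i ≤ e (i + 1)) → e j < b →
    ∃ i ≤ j, e i ∈ T

variable {n : ℕ} {W : ℕ → ℕ → Prop} {t : ℕ → ℕ}

lemma le_row (p : ℕ → ℕ) (j : ℕ) : p j ≤ row n W t p j := by
  cases j with
  | zero => exact le_next _ _ _
  | succ j => exact (le_max_left _ _).trans (le_next _ _ _)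

lemma row_spread (p : ℕ → ℕ) (j : ℕ) : row n W t p j + t j ≤ row n W t p (j + 1) :=
  (le_max_right _ _).trans (le_next _ _ _)

lemma row_mem {p : ℕ → ℕ} {j : ℕ} (h : row n W t p j < n) : W j (row n W t p j) := by
  cases j with
  | zero => exact next_mem h
  | succ j => exact next_mem h

lemma separates_row {p : ℕ → ℕ} {k : ℕ}
    (hp : ∀ j, ∃ T : Finset ℕ, T.card ≤ k ∧ Separates W t T j (p j)) (j : ℕ) :
    ∃ T : Finset ℕ, T.card ≤ k ∧ Separates W t T j (row n W t p j) := by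
  induction j with
  | zero =>
    obtain ⟨T, hT, h⟩ := hp 0
    exact ⟨T, hT, fun e hW hs hlt => h e hW hs (lt_of_lt_next (hW 0 le_rfl) hlt)⟩
  | succ j ih =>
    rcases le_total (p (j + 1)) (row n W t p j + t j) with hle | hle
    · obtain ⟨T, hT, h⟩ := ih
      refine ⟨T, hT, fun e hW hs hlt => ?_⟩
      have h1 := lt_of_lt_next (hW (j + 1) le_rfl) hlt
      rw [max_eq_right hle] at h1
      have h2 := hs j (Nat.lt_succ_self j)
      obtain ⟨i, hi, hiT⟩ := h e (fun i hi => hW i (by omega)) (fun i hi => hs i (by omega))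
        (by omega)
      exact ⟨i, by omega, hiT⟩
    · obtain ⟨T, hT, h⟩ := hp (j + 1)
      refine ⟨T, hT, fun e hW hs hlt => h e hW hs ?_⟩
      have h1 := lt_of_lt_next (hW (j + 1) le_rfl) hlt
      rwa [max_eq_left hle] at h1

lemma separates_greedy (k j : ℕ) :
    ∃ T : Finset ℕ, T.card ≤ k ∧ Separates W t T j (greedy n W t k j) := by
  induction k generalizing j with
  | zero =>
    exact separates_row
      (fun j => ⟨∅, le_rfl, fun e _ _ h => absurd h (Nat.not_lt_zero _)⟩) j
  | succ k ih =>
    refine separates_row (fun j => ?_) j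
    obtain ⟨T, hT, h⟩ := ih j
    refine ⟨insert (greedy n W t k j) T, (Finset.card_insert_le _ _).trans (by omega),
      fun e hW hs hlt => ?_⟩
    rcases Nat.lt_succ_iff_lt_or_eq.1 hlt with h1 | h1
    · obtain ⟨i, hi, hiT⟩ := h e hW hs h1
      exact ⟨i, hi, Finset.mem_insert_of_mem hiT⟩
    · exact ⟨j, le_rfl, Finset.mem_insert.2 (Or.inl h1)⟩

lemma greedy_spread (k j : ℕ) : greedy n W t k j + t j ≤ greedy n W t k (j + 1) := by
  cases k <;> exact row_spread _ _

lemma greedy_mem {k j : ℕ} (h : greedy n W t k j < n) : W j (greedy n W t k j) := by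
  cases k <;> exact row_mem h

lemma greedy_strictMono (j : ℕ) : StrictMono fun k => greedy n W t k j :=
  strictMono_nat_of_lt_succ fun k => le_row (fun j => greedy n W t k j + 1) j

lemma greedy_mono (k : ℕ) : Monotone (greedy n W t k) :=
  monotone_nat_of_le_succ fun j => (Nat.le_add_right _ _).trans (greedy_spread k j)

/-- Weak duality: choosing a point of `T` in each member of the matching `M` is injective. -/
lemma card_le_card_transversal {α : Type*} [DecidableEq α] {M : Finset (Finset α)} {T : Finset α}
    (hM : ∀ E ∈ M, ∀ F ∈ M, E ≠ F → Disjoint E F) (hT : ∀ E ∈ M, (T ∩ E).Nonempty) :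
    M.card ≤ T.card := by
  choose g hg using hT
  rw [← Finset.card_attach (s := M)]
  refine Finset.card_le_card_of_injOn (fun E => g E.1 E.2)
    (fun E _ => (Finset.mem_inter.1 (hg E.1 E.2)).1) ?_
  intro E _ F _ hEF
  by_contra hne
  exact Finset.disjoint_left.1 (hM E.1 E.2 F.1 F.2 fun h => hne (Subtype.ext h))
    (Finset.mem_inter.1 (hg E.1 E.2)).2
    ((show g E.1 E.2 = g F.1 F.2 from hEF) ▸ (Finset.mem_inter.1 (hg F.1 F.2)).2)

/-- The greedy algorithm yields a matching and a transversal of no larger size. -/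
lemma exists_matching_transversal (n d : ℕ) (hd : 0 < d) (V : Fin d → Finset (Fin n)) (t : ℕ → ℕ)
    (hV : ∀ i j : Fin d, i < j → ∀ p ∈ V i, ∀ q ∈ V j, (p : ℕ) < (q : ℕ)) :
    ∃ (M : Finset (Finset (Fin n))) (T : Finset (Fin n)),
      (∀ E ∈ M, E ∈ spreadEdgeSet n d V t) ∧
      (∀ E ∈ M, ∀ F ∈ M, E ≠ F → Disjoint E F) ∧
      (∀ E ∈ spreadEdgeSet n d V t, (T ∩ E).Nonempty) ∧ T.card ≤ M.card := by
  classical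
  let W : ℕ → ℕ → Prop := fun j v => ∃ h : j < d, ∃ p ∈ V ⟨j, h⟩, (p : ℕ) = v
  have hex : ∃ k, n ≤ greedy n W t k (d - 1) := ⟨n, (greedy_strictMono (d - 1)).le_apply⟩
  obtain ⟨K, hK, hmin⟩ : ∃ K, n ≤ greedy n W t K (d - 1) ∧
      ∀ k < K, greedy n W t k (d - 1) < n :=
    ⟨Nat.find hex, Nat.find_spec hex, fun k hk => not_le.1 (Nat.find_min hex hk)⟩
  have hlt : ∀ (k : Fin K) (j : Fin d), greedy n W t k j < n := fun k j =>
    (greedy_mono _ (by omega)).trans_lt (hmin k k.2)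
  let g : Fin K → Fin d → Fin n := fun k j => ⟨greedy n W t k j, hlt k j⟩
  have hgV : ∀ k j, g k j ∈ V j := by
    intro k j
    obtain ⟨_, p, hp, hpv⟩ := greedy_mem (hlt k j)
    have : p = g k j := Fin.ext hpv
    exact this ▸ hp
  have hginj : ∀ k k' j j', g k j = g k' j' → k = k' := by
    intro k k' j j' h
    rcases lt_trichotomy j j' with hj | rfl | hj
    · exact absurd (congrArg Fin.val h) (hV j j' hj _ (hgV k j) _ (hgV k' j')).ne
    · exact Fin.ext ((greedy_strictMono (j : ℕ)).injective (congrArg Fin.val h))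
    · exact absurd (congrArg Fin.val h) (hV j' j hj _ (hgV k' j') _ (hgV k j)).ne'
  let E : Fin K → Finset (Fin n) := fun k => Finset.image (g k) Finset.univ
  have hEdisj : ∀ k k', k ≠ k' → Disjoint (E k) (E k') := by
    intro k k' hkk
    refine Finset.disjoint_left.2 fun v hv hv' => ?_
    obtain ⟨j, -, hj⟩ := Finset.mem_image.1 hv
    obtain ⟨j', -, hj'⟩ := Finset.mem_image.1 hv'
    exact hkk (hginj k k' j j' (hj.trans hj'.symm))
  -- Edges are nonempty because `0 < d`, so disjoint edges are distinct.
  have hEinj : Function.Injective E := by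
    intro k k' h
    by_contra hkk
    have hmem : g k ⟨0, hd⟩ ∈ E k := Finset.mem_image_of_mem _ (Finset.mem_univ _)
    exact Finset.disjoint_left.1 (hEdisj k k' hkk) hmem (h ▸ hmem)
  obtain ⟨T, hTc, hT⟩ := separates_greedy (n := n) (W := W) (t := t) K (d - 1)
  refine ⟨Finset.univ.image E, Finset.univ.filter fun v => (v : ℕ) ∈ T, ?_, ?_, ?_, ?_⟩
  · intro F hF
    obtain ⟨k, -, rfl⟩ := Finset.mem_image.1 hF
    exact ⟨g k, ⟨hgV k, fun j _ => greedy_spread _ j⟩, rfl⟩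
  · intro F hF G hG hFG
    obtain ⟨k, -, rfl⟩ := Finset.mem_image.1 hF
    obtain ⟨k', -, rfl⟩ := Finset.mem_image.1 hG
    exact hEdisj k k' fun h => hFG (h ▸ rfl)
  · rintro _ ⟨e, ⟨heV, hes⟩, rfl⟩
    -- Extend the edge to a function on `ℕ`; the values beyond `d - 1` are irrelevant.
    let e' : ℕ → ℕ := fun j => if h : j < d then e ⟨j, h⟩ else 0
    have he' : ∀ (j : ℕ) (h : j < d), e' j = e ⟨j, h⟩ := fun j h => dif_pos h
    obtain ⟨i, hi, hiT⟩ := hT e'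
      (fun i hi => ⟨by omega, e ⟨i, by omega⟩, heV _, (he' i _).symm⟩)
      (fun i hi => by
        rw [he' i (by omega), he' (i + 1) (by omega)]
        exact hes i (by omega))
      (by
        rw [he' (d - 1) (by omega)]
        exact (e _).2.trans_le hK)
    have hid : i < d := by omega
    rw [he' i hid] at hiT
    exact ⟨e ⟨i, hid⟩, Finset.mem_inter.2 ⟨Finset.mem_filter.2 ⟨Finset.mem_univ _, hiT⟩,
      Finset.mem_image_of_mem _ (Finset.mem_univ _)⟩⟩
  · rw [Finset.card_image_of_injective _ hEinj, Finset.card_univ, Fintype.card_fin]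
    refine le_trans ?_ hTc
    exact Finset.card_le_card_of_injOn Fin.val (fun v hv => (Finset.mem_filter.1 hv).2)
      Fin.val_injective.injOn

end SpreadKonig

/-- **Corollary (König property).**  For a complete `𝐭`-spread `d`-partite hypergraph,
the maximum size of a matching equals the minimum size of a transversal. -/
theorem spread_hypergraph_konig
    (n d : ℕ) (hd : 0 < d)
    (V : Fin d → Finset (Fin n)) (t : ℕ → ℕ)
    (ht : ∀ i, 1 ≤ t i)
    (hV : ∀ i j : Fin d, i < j → ∀ p ∈ V i, ∀ q ∈ V j, (p : ℕ) < (q : ℕ))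
    (hne : ∀ j, (V j).Nonempty)
    (hiso : ∀ (j : Fin d), ∀ v ∈ V j, ∃ e, IsSpreadEdge n d V t e ∧ e j = v) :
    matchingNumber n d V t = transversalNumber n d V t := by
  obtain ⟨M, T, hME, hMd, hT, hTM⟩ := SpreadKonig.exists_matching_transversal n d hd V t hV
  unfold matchingNumber transversalNumber
  apply le_antisymm
  · refine csSup_le ⟨_, M, hME, hMd, rfl⟩ ?_
    rintro _ ⟨M', hM'E, hM'd, rfl⟩
    refine le_csInf ⟨_, T, hT, rfl⟩ ?_
    rintro _ ⟨T', hT', rfl⟩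
    exact SpreadKonig.card_le_card_transversal hM'd fun E hE => hT' E (hM'E E hE)
  · refine le_trans (Nat.sInf_le ⟨T, hT, rfl⟩) (hTM.trans ?_)
    refine le_csSup ⟨T.card, ?_⟩ ⟨M, hME, hMd, rfl⟩
    rintro _ ⟨M', hM'E, hM'd, rfl⟩
    exact SpreadKonig.card_le_card_transversal hM'd fun E hE => hT E (hM'E E hE)
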